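/- Let (X, W) be a strong left Frobenius pair in A and let n ≥ 0. The following are equivalent: (1) X̂_n = A, i.e., every object of A has X-resolution dimension at most n; (2) ((W, A), (X, Ŵ_n)) is a Hovey twin cotorsion pair on A, i.e., both (W, A) and (X, Ŵ_n) are cotorsion pairs on A, Ext^1(W, Y) = 0 for all W ∈ W, Y ∈ Ŵ_n, and Cone(Ŵ_n, W) = CoCone(Ŵ_n, W). -/

import Mathlib

/-!
The implication from (2) to (1) uses only the pair `(X, Ŵₙ)`. Embed `M` in some `V ∈ Ŵₙ` with
cokernel in `X`. When `n = 0`, `M` is the kernel of an epimorphism in `X`. When `n ≥ 1`, pulling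
back `0 → K → W₀ → V → 0` (`K ∈ Ŵₙ₋₁`) along `M → V` gives `0 → K → P → M → 0`, where `P` is the
kernel of an epimorphism from `W₀` onto an object of `X`, hence lies in `X`
(`hat_of_coresolution`).

For the implication from (1) to (2), the Auslander–Buchweitz approximations `exists_coresolution`
and `exists_resolution`, built by pushouts from the cogenerator `W`, provide the short exact
sequences required of the pair `(X, Ŵₙ)`. Dimension shifting gives `Extⁱ(X, Ŵₙ) = 0` and, since
everything lies in `X̂ₙ`, also `Extⁱ(W, -) = 0`: this makes `(W, C)` a cotorsion pair. Moreover
`Ŵₙ` is exactly the class of `N` with `Ext¹(X, N) = 0` (`hatW_of_ext_one`), because in an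
approximation `0 → Y → X₀ → N → 0` of such an `N` the object `X₀` satisfies `Ext¹(X, X₀) = 0`
and is therefore a summand of an object of `W`. So `Ŵₙ` is closed under direct summands and under
cokernels of monomorphisms, which shows that both `Cone(Ŵₙ, W)` and `CoCone(Ŵₙ, W)` equal `Ŵₙ`.
-/

open CategoryTheory CategoryTheory.Limits CategoryTheory.Abelian ZeroObject

universe w v u

namespace FrobeniusPaper

variable {C : Type u} [Category.{v} C] [Abelian C]

/-- `f, g` form a short exact sequence `0 → A → B → D → 0` in the abelian category `C`. -/
def IsSES {A B D : C} (f : A ⟶ B) (g : B ⟶ D) : Prop :=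
  ∃ w : f ≫ g = 0, (ShortComplex.mk f g w).ShortExact

/-- A "subcategory" in the sense of the paper: a full additive subcategory, regarded as the
predicate of membership for its objects, closed under isomorphisms and direct summands. -/
structure IsSubcat (X : C → Prop) : Prop where
  zero : X 0
  iso_closed : ∀ {A B : C}, (A ≅ B) → X A → X B
  biprod_closed : ∀ {A B : C}, X A → X B → X (A ⊞ B)
  summand_closed : ∀ {A M : C} (i : A ⟶ M) (p : M ⟶ A), i ≫ p = 𝟙 A → X M → X A

/-- `Hat X n M` means `M ∈ X̂ₙ`, i.e. there is an exact sequence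
`0 → Xₙ → ⋯ → X₁ → X₀ → M → 0` with all `Xᵢ ∈ X`. -/
def Hat (X : C → Prop) : ℕ → C → Prop
  | 0, M => X M
  | (n + 1), M => ∃ (K E : C) (f : K ⟶ E) (g : E ⟶ M), IsSES f g ∧ X E ∧ Hat X n K

/-- `M ∈ X̂ = ⋃ₙ X̂ₙ`. -/
def HatAll (X : C → Prop) (M : C) : Prop := ∃ n, Hat X n M

/-- `W` is a cogenerator for `X`. -/
def IsCogenerator (W X : C → Prop) : Prop :=
  (∀ M, W M → X M) ∧
    ∀ M, X M → ∃ (W₀ X' : C) (f : M ⟶ W₀) (g : W₀ ⟶ X'), IsSES f g ∧ W W₀ ∧ X X'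

/-- `W` is a generator for `X`. -/
def IsGenerator (W X : C → Prop) : Prop :=
  (∀ M, W M → X M) ∧
    ∀ M, X M → ∃ (X' W₀ : C) (f : X' ⟶ W₀) (g : W₀ ⟶ M), IsSES f g ∧ W W₀ ∧ X X'

/-- `X` is closed under extensions. -/
def ExtClosed (X : C → Prop) : Prop :=
  ∀ ⦃A B D : C⦄ (f : A ⟶ B) (g : B ⟶ D), IsSES f g → X A → X D → X B

/-- `X` is closed under kernels of epimorphisms. -/
def KerEpiClosed (X : C → Prop) : Prop :=
  ∀ ⦃A B D : C⦄ (f : A ⟶ B) (g : B ⟶ D), IsSES f g → X B → X D → X A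

/-- A thick subcategory: closed under direct summands and two-out-of-three for
short exact sequences. -/
def IsThickSub (T : C → Prop) : Prop :=
  IsSubcat T ∧ ∀ ⦃A B D : C⦄ (f : A ⟶ B) (g : B ⟶ D), IsSES f g →
    (T A → T B → T D) ∧ (T A → T D → T B) ∧ (T B → T D → T A)

/-- Membership in `Thick(X)`, the smallest thick subcategory containing `X`. -/
def thickClosure (X : C → Prop) (M : C) : Prop :=
  ∀ T : C → Prop, IsThickSub T → (∀ N, X N → T N) → T M

variable [HasExt.{w} C]

/-- `Y ∈ X^⊥`, i.e. `Extⁱ(M, Y) = 0` for all `i ≥ 1` and `M ∈ X`. -/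
def rightPerp (X : C → Prop) (Y : C) : Prop :=
  ∀ M, X M → ∀ i : ℕ, 1 ≤ i → Subsingleton (Abelian.Ext M Y i)

/-- A left Frobenius pair `(X, W)`. -/
structure LeftFrobenius (X W : C → Prop) : Prop where
  subX : IsSubcat X
  subW : IsSubcat W
  extClosed : ExtClosed X
  kerEpiClosed : KerEpiClosed X
  cogen : IsCogenerator W X
  perp : ∀ M, W M → rightPerp X M

/-- A strong left Frobenius pair `(X, W)`. -/
structure StrongLeftFrobenius (X W : C → Prop) extends LeftFrobenius X W : Prop where
  gen : IsGenerator W X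
  proj : ∀ M N, W M → X N → ∀ i : ℕ, 1 ≤ i → Subsingleton (Abelian.Ext M N i)

/-- A cotorsion pair `(U, V)` on an extension-closed subcategory `B` of `C`. -/
structure CotorsionPairOn (B U V : C → Prop) : Prop where
  subU : ∀ M, U M → B M
  subV : ∀ M, V M → B M
  isoU : ∀ {A B' : C}, (A ≅ B') → U A → U B'
  summandU : ∀ {A M : C} (i : A ⟶ M) (p : M ⟶ A), i ≫ p = 𝟙 A → U M → U A
  isoV : ∀ {A B' : C}, (A ≅ B') → V A → V B'
  summandV : ∀ {A M : C} (i : A ⟶ M) (p : M ⟶ A), i ≫ p = 𝟙 A → V M → V A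
  ext1 : ∀ M N, U M → V N → Subsingleton (Abelian.Ext M N 1)
  res : ∀ M, B M → ∃ (V₀ U₀ : C) (f : V₀ ⟶ U₀) (g : U₀ ⟶ M), IsSES f g ∧ U U₀ ∧ V V₀
  cores : ∀ M, B M → ∃ (V₀ U₀ : C) (f : M ⟶ V₀) (g : V₀ ⟶ U₀), IsSES f g ∧ U U₀ ∧ V V₀

/-- `Cone(V, S)`: objects `M` admitting a short exact sequence `0 → V₀ → S₀ → M → 0` with
`V₀ ∈ V` and `S₀ ∈ S`. -/
def ConeCls (V S : C → Prop) (M : C) : Prop :=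
  ∃ (V₀ S₀ : C) (f : V₀ ⟶ S₀) (g : S₀ ⟶ M), IsSES f g ∧ V V₀ ∧ S S₀

/-- `CoCone(V, S)`: objects `M` admitting a short exact sequence `0 → M → V₀ → S₀ → 0` with
`V₀ ∈ V` and `S₀ ∈ S`. -/
def CoConeCls (V S : C → Prop) (M : C) : Prop :=
  ∃ (V₀ S₀ : C) (f : M ⟶ V₀) (g : V₀ ⟶ S₀), IsSES f g ∧ V V₀ ∧ S S₀

section Helpers

variable {C : Type u} [Category.{v} C] [Abelian C]

/-! ### Short exact sequences, pushouts and pullbacks -/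

lemma isSES_of_cokernel {A B D : C} (f : A ⟶ B) (g : B ⟶ D) (w : f ≫ g = 0) [Mono f] [Epi g]
    (h : ∀ (T : C) (t : B ⟶ T), f ≫ t = 0 → ∃ s, g ≫ s = t) : IsSES f g := by
  refine ⟨w, .mk' ?_ ‹_› ‹_›⟩
  apply ShortComplex.exact_of_g_is_cokernel
  exact CokernelCofork.IsColimit.ofπ' _ _
    (fun {T} t ht => ⟨(h T t ht).choose, (h T t ht).choose_spec⟩)

lemma isSES_of_kernel {A B D : C} (f : A ⟶ B) (g : B ⟶ D) (w : f ≫ g = 0) [Mono f] [Epi g]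
    (h : ∀ (T : C) (t : T ⟶ B), t ≫ g = 0 → ∃ s, s ≫ f = t) : IsSES f g := by
  refine ⟨w, .mk' ?_ ‹_› ‹_›⟩
  apply ShortComplex.exact_of_f_is_kernel
  exact KernelFork.IsLimit.ofι' _ _
    (fun {T} t ht => ⟨(h T t ht).choose, (h T t ht).choose_spec⟩)

lemma IsSES.mono {A B D : C} {f : A ⟶ B} {g : B ⟶ D} (h : IsSES f g) : Mono f := h.2.mono_f

lemma IsSES.epi {A B D : C} {f : A ⟶ B} {g : B ⟶ D} (h : IsSES f g) : Epi g := h.2.epi_g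

lemma IsSES.exists_desc {A B D : C} {f : A ⟶ B} {g : B ⟶ D} (h : IsSES f g) {T : C}
    (t : B ⟶ T) (ht : f ≫ t = 0) : ∃ s, g ≫ s = t := by
  have := h.epi
  exact ⟨h.2.exact.desc t ht, h.2.exact.g_desc t ht⟩

lemma IsSES.exists_lift {A B D : C} {f : A ⟶ B} {g : B ⟶ D} (h : IsSES f g) {T : C}
    (t : T ⟶ B) (ht : t ≫ g = 0) : ∃ s, s ≫ f = t := by
  have := h.mono
  exact ⟨h.2.exact.lift t ht, h.2.exact.lift_f t ht⟩

lemma isSES_zero_id (M : C) : IsSES (0 : (0 : C) ⟶ M) (𝟙 M) :=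
  isSES_of_cokernel _ _ (by simp) (fun _ t _ => ⟨t, by simp⟩)

lemma isSES_id_zero (M : C) : IsSES (𝟙 M) (0 : M ⟶ (0 : C)) :=
  isSES_of_kernel _ _ (by simp) (fun _ t _ => ⟨t, by simp⟩)

/-- The pushout of `0 → A → B → D → 0` along `A ⟶ B'` is a short exact sequence
`0 → B' → P → D → 0`. -/
lemma IsSES.of_isPushout {A B D B' P : C} {f : A ⟶ B} {g : B ⟶ D} (h : IsSES f g)
    {u : A ⟶ B'} {inl : B ⟶ P} {inr : B' ⟶ P} (sq : IsPushout f u inl inr) :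
    ∃ q : P ⟶ D, IsSES inr q := by
  have := h.mono
  have := h.epi
  have : Mono inr :=
    MorphismProperty.of_isPushout (P := MorphismProperty.monomorphisms C) sq.flip ‹Mono f›
  obtain ⟨q, hql, hqr⟩ : ∃ q, inl ≫ q = g ∧ inr ≫ q = 0 :=
    ⟨sq.desc g 0 (by rw [h.1, comp_zero]), sq.inl_desc _ _ _, sq.inr_desc _ _ _⟩
  have : Epi q := by
    have : Epi (inl ≫ q) := by rw [hql]; infer_instance
    exact epi_of_epi inl _
  refine ⟨q, isSES_of_cokernel _ _ hqr (fun T t ht => ?_)⟩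
  obtain ⟨s, hs⟩ := h.exists_desc (inl ≫ t) (by rw [sq.w_assoc, ht, comp_zero])
  exact ⟨s, sq.hom_ext (by rw [reassoc_of% hql, hs]) (by rw [reassoc_of% hqr, ht, zero_comp])⟩

lemma exists_pushout_ses {A B D B' D' : C} {f : A ⟶ B} {g : B ⟶ D} (h : IsSES f g)
    {f' : A ⟶ B'} {g' : B' ⟶ D'} (h' : IsSES f' g') :
    ∃ (P : C) (i : B' ⟶ P) (p : P ⟶ D) (j : B ⟶ P) (q : P ⟶ D'), IsSES i p ∧ IsSES j q := by
  have sq := IsPushout.of_hasPushout f f'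
  obtain ⟨p, hp⟩ := h.of_isPushout sq
  obtain ⟨q, hq⟩ := h'.of_isPushout sq.flip
  exact ⟨_, _, p, _, q, hp, hq⟩

/-- Noether isomorphism for `A ⊆ B ⊆ E`: the cokernel `Q` of `A ⟶ E` is an extension of
`E/B = F` by `B/A = D`. -/
lemma exists_quotient_ses {A B D E F : C} {f : A ⟶ B} {g : B ⟶ D} (h : IsSES f g)
    {i : B ⟶ E} {k : E ⟶ F} (h' : IsSES i k) :
    ∃ (Q : C) (p : E ⟶ Q) (j : D ⟶ Q) (q : Q ⟶ F), IsSES (f ≫ i) p ∧ IsSES j q := by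
  have sq := IsPushout.of_hasPushout i g
  obtain ⟨q, hq⟩ := h'.of_isPushout sq
  have := h.mono
  have := h'.mono
  have := h.epi
  refine ⟨_, pushout.inl i g, _, q, isSES_of_cokernel _ _ ?_ ?_, hq⟩
  · rw [Category.assoc, sq.w, ← Category.assoc, h.1, zero_comp]
  · intro T t ht
    obtain ⟨s, hs⟩ := h.exists_desc (i ≫ t) (by simpa using ht)
    exact ⟨sq.desc t s hs.symm, by simp⟩

/-- The preimage `P` in `E` of the subobject `M` of `V = E/K` is an extension of `M` by `K`, and
`E/P = V/M = U`. -/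
lemma exists_preimage_ses {K E V M U : C} {f : K ⟶ E} {g : E ⟶ V} (h : IsSES f g)
    {i : M ⟶ V} {k : V ⟶ U} (h' : IsSES i k) :
    ∃ (P : C) (j : K ⟶ P) (q : P ⟶ M) (r : P ⟶ E), IsSES j q ∧ IsSES r (g ≫ k) := by
  have sq := IsPullback.of_hasPullback i g
  have := h.mono
  have := h'.mono
  have := h.epi
  have := h'.epi
  obtain ⟨j, hj₁, hj₂⟩ : ∃ j, j ≫ pullback.fst i g = 0 ∧ j ≫ pullback.snd i g = f :=
    ⟨sq.lift 0 f (by rw [h.1, zero_comp]), sq.lift_fst _ _ _, sq.lift_snd _ _ _⟩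
  have : Mono j := by
    have : Mono (j ≫ pullback.snd i g) := by rw [hj₂]; infer_instance
    exact mono_of_mono _ (pullback.snd i g)
  refine ⟨_, j, pullback.fst i g, pullback.snd i g, isSES_of_kernel _ _ hj₁ ?_,
    isSES_of_kernel _ _ ?_ ?_⟩
  · intro T t ht
    obtain ⟨s, hs⟩ := h.exists_lift (t ≫ pullback.snd i g)
      (by rw [Category.assoc, ← sq.w, ← Category.assoc, ht, zero_comp])
    exact ⟨s, sq.hom_ext (by simp [hj₁, ht]) (by simp [hj₂, hs])⟩
  · rw [← sq.w_assoc, h'.1, comp_zero]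
  · intro T t ht
    obtain ⟨s, hs⟩ := h'.exists_lift (t ≫ g) (by simpa using ht)
    exact ⟨sq.lift s t hs, by simp⟩

/-! ### Vanishing of Ext and short exact sequences -/

section Ext

variable [HasExt.{w} C]

lemma IsSES.ext_middle {A B D : C} {f : A ⟶ B} {g : B ⟶ D} (h : IsSES f g) (Z : C) (i : ℕ)
    (hA : Subsingleton (Ext Z A i)) (hD : Subsingleton (Ext Z D i)) :
    Subsingleton (Ext Z B i) := by
  refine subsingleton_of_forall_eq 0 fun x => ?_
  obtain ⟨y, rfl⟩ := Ext.covariant_sequence_exact₂ Z h.2 x (Subsingleton.elim _ _)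
  rw [Subsingleton.elim y 0, Ext.zero_comp]

lemma IsSES.ext_right {A B D : C} {f : A ⟶ B} {g : B ⟶ D} (h : IsSES f g) (Z : C) (i : ℕ)
    (hB : Subsingleton (Ext Z B i)) (hA : Subsingleton (Ext Z A (i + 1))) :
    Subsingleton (Ext Z D i) := by
  refine subsingleton_of_forall_eq 0 fun x => ?_
  obtain ⟨y, rfl⟩ := Ext.covariant_sequence_exact₃ Z h.2 x rfl (Subsingleton.elim _ _)
  rw [Subsingleton.elim y 0, Ext.zero_comp]

lemma IsSES.exists_retraction {A B D : C} {f : A ⟶ B} {g : B ⟶ D} (h : IsSES f g)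
    (hD : Subsingleton (Ext D A 1)) : ∃ r : B ⟶ A, f ≫ r = 𝟙 A := by
  obtain ⟨y, hy⟩ := Ext.contravariant_sequence_exact₁ h.2 A (Ext.mk₀ (𝟙 A)) (n₁ := 1) rfl
    (Subsingleton.elim (α := Ext D A 1) _ _)
  refine ⟨Ext.homEquiv₀ y, (Ext.mk₀_bijective _ _).1 ?_⟩
  rw [← hy, ← Ext.mk₀_comp_mk₀, Ext.mk₀_homEquiv₀_apply]

lemma ext_summand {Z A M : C} (i : A ⟶ M) (p : M ⟶ A) (hip : i ≫ p = 𝟙 A) (k : ℕ)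
    (hM : Subsingleton (Ext Z M k)) : Subsingleton (Ext Z A k) := by
  refine subsingleton_of_forall_eq 0 fun x => ?_
  have hx : (x.comp (Ext.mk₀ i) (add_zero k)).comp (Ext.mk₀ p) (add_zero k) = x := by
    rw [Ext.comp_assoc_of_third_deg_zero, Ext.mk₀_comp_mk₀, hip, Ext.comp_mk₀_id]
  rw [← hx, Subsingleton.elim (x.comp (Ext.mk₀ i) (add_zero k)) 0, Ext.zero_comp]

/-- Dimension shifting along a finite `Y`-resolution. -/
lemma ext_hat {Y : C → Prop} {Z : C}
    (hY : ∀ N, Y N → ∀ i : ℕ, 1 ≤ i → Subsingleton (Ext Z N i)) (n : ℕ) :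
    ∀ N, Hat Y n N → ∀ i : ℕ, 1 ≤ i → Subsingleton (Ext Z N i) := by
  induction n with
  | zero => exact hY
  | succ n ih =>
    rintro N ⟨K, E, f, g, h, hE, hK⟩ i hi
    exact h.ext_right Z i (hY E hE i hi) (ih K hK (i + 1) (by omega))

end Ext

/-! ### Resolution dimension -/

lemma hat_succ {Y : C → Prop} (h0 : Y 0) {n : ℕ} : ∀ {M : C}, Hat Y n M → Hat Y (n + 1) M := by
  induction n with
  | zero => exact fun {M} hM => ⟨0, M, 0, 𝟙 M, isSES_zero_id M, hM, h0⟩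
  | succ n ih => exact fun ⟨K, E, f, g, h, hE, hK⟩ => ⟨K, E, f, g, h, hE, ih hK⟩

lemma hat_mono {Y Z : C → Prop} (hYZ : ∀ M, Y M → Z M) (n : ℕ) :
    ∀ M, Hat Y n M → Hat Z n M := by
  induction n with
  | zero => exact hYZ
  | succ n ih => exact fun M ⟨K, E, f, g, h, hE, hK⟩ => ⟨K, E, f, g, h, hYZ E hE, ih K hK⟩

lemma hat_zero {Y : C → Prop} (h0 : Y 0) (n : ℕ) : Hat Y n (0 : C) := by
  induction n with
  | zero => exact h0
  | succ n ih => exact hat_succ h0 ih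

/-! ### Auslander–Buchweitz approximations -/

section Frobenius

variable [HasExt.{w} C] {X W : C → Prop}

lemma exists_resolution_of_coresolution (hF : LeftFrobenius X W) {n : ℕ}
    (hn : ∀ K, Hat X n K → ∃ (V U : C) (f : K ⟶ V) (g : V ⟶ U), IsSES f g ∧ X U ∧ Hat W n V)
    {M : C} (hM : Hat X (n + 1) M) :
    ∃ (V U : C) (f : V ⟶ U) (g : U ⟶ M), IsSES f g ∧ X U ∧ Hat W n V := by
  obtain ⟨K, E, f, g, h, hE, hK⟩ := hM
  obtain ⟨V, U, f', g', h', hU, hV⟩ := hn K hK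
  obtain ⟨P, i, p, j, q, hip, hjq⟩ := exists_pushout_ses h h'
  exact ⟨V, P, i, p, hip, hF.extClosed j q hjq hE hU, hV⟩

/-- Every `M ∈ X̂ₙ` embeds in an object of `Ŵₙ` with cokernel in `X`. -/
lemma exists_coresolution (hF : LeftFrobenius X W) (n : ℕ) :
    ∀ M, Hat X n M →
      ∃ (V U : C) (f : M ⟶ V) (g : V ⟶ U), IsSES f g ∧ X U ∧ Hat W n V := by
  induction n with
  | zero =>
    intro M hM
    obtain ⟨V, U, f, g, h, hV, hU⟩ := hF.cogen.2 M hM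
    exact ⟨V, U, f, g, h, hU, hV⟩
  | succ n ih =>
    intro M hM
    obtain ⟨V, U, f, g, h, hU, hV⟩ := exists_resolution_of_coresolution hF ih hM
    obtain ⟨W₀, X', i, k, h', hW₀, hX'⟩ := hF.cogen.2 U hU
    obtain ⟨Q, p, j, q, hp, hj⟩ := exists_quotient_ses h h'
    exact ⟨Q, X', j, q, hj, hX', V, W₀, f ≫ i, p, hp, hW₀, hV⟩

/-- Every `M ∈ X̂ₙ₊₁` is a quotient of an object of `X` by an object of `Ŵₙ`. -/
lemma exists_resolution (hF : LeftFrobenius X W) (n : ℕ) (M : C) (hM : Hat X (n + 1) M) :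
    ∃ (V U : C) (f : V ⟶ U) (g : U ⟶ M), IsSES f g ∧ X U ∧ Hat W n V :=
  exists_resolution_of_coresolution hF (exists_coresolution hF n) hM

/-- `X ∩ X^⊥ ⊆ W`. -/
lemma mem_W_of_ext_one (hF : LeftFrobenius X W) {M : C} (hM : X M)
    (h : ∀ Z, X Z → Subsingleton (Ext Z M 1)) : W M := by
  obtain ⟨V, U, f, g, hs, hV, hU⟩ := hF.cogen.2 M hM
  obtain ⟨r, hr⟩ := hs.exists_retraction (h U hU)
  exact hF.subW.summand_closed f r hr hV

lemma ext_hatW (hF : LeftFrobenius X W) (n : ℕ) {Z N : C} (hZ : X Z) (hN : Hat W n N) (i : ℕ)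
    (hi : 1 ≤ i) : Subsingleton (Ext Z N i) :=
  ext_hat (fun N hN i hi => hF.perp N hN Z hZ i hi) n N hN i hi

lemma hatW_of_ext_one (hF : LeftFrobenius X W) (n : ℕ) {N : C} (hN : Hat X n N)
    (h : ∀ Z, X Z → Subsingleton (Ext Z N 1)) : Hat W n N := by
  cases n with
  | zero => exact mem_W_of_ext_one hF hN h
  | succ n =>
    obtain ⟨V, U, f, g, hs, hU, hV⟩ := exists_resolution hF n N hN
    refine ⟨V, U, f, g, hs, mem_W_of_ext_one hF hU fun Z hZ => ?_, hV⟩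
    exact hs.ext_middle Z 1 (ext_hatW hF n hZ hV 1 le_rfl) (h Z hZ)

lemma hat_of_coresolution (hF : LeftFrobenius X W) (n : ℕ) {M V U : C} {f : M ⟶ V} {g : V ⟶ U}
    (h : IsSES f g) (hU : X U) (hV : Hat W n V) : Hat X n M := by
  cases n with
  | zero => exact hF.kerEpiClosed f g h (hF.cogen.1 V hV) hU
  | succ n =>
    obtain ⟨K, E, i, p, hs, hE, hK⟩ := hV
    obtain ⟨P, j, q, r, hjq, hr⟩ := exists_preimage_ses hs h
    exact ⟨K, P, j, q, hjq, hF.kerEpiClosed r _ hr (hF.cogen.1 E hE) hU,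
      hat_mono hF.cogen.1 n K hK⟩

end Frobenius

end Helpers

/-- For a strong left Frobenius pair `(X, W)` and `n ≥ 0`, the following are
equivalent: (1) `X̂ₙ = C`; (2) `((W, C), (X, Ŵₙ))` is a Hovey twin cotorsion pair on `C`. -/
theorem statement14 {C : Type u} [Category.{v} C] [Abelian C]
    [EnoughProjectives C] [EnoughInjectives C] [HasExt.{w} C]
    (X W : C → Prop) (hF : StrongLeftFrobenius X W) (n : ℕ) :
    (∀ M : C, Hat X n M) ↔
      (CotorsionPairOn (fun _ => True) W (fun _ => True) ∧
       CotorsionPairOn (fun _ => True) X (Hat W n) ∧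
       (∀ M N, W M → Hat W n N → Subsingleton (Abelian.Ext M N 1)) ∧
       (∀ M, ConeCls (Hat W n) W M ↔ CoConeCls (Hat W n) W M)) := by
  have hL := hF.toLeftFrobenius
  constructor
  · intro hX
    have hWproj : ∀ M N, W M → Subsingleton (Ext M N 1) := fun M N hM =>
      ext_hat (fun N hN i hi => hF.proj M N hM hN i hi) n N (hX N) 1 le_rfl
    have hsummand : ∀ {A M : C} (i : A ⟶ M) (p : M ⟶ A), i ≫ p = 𝟙 A → Hat W n M →
        Hat W n A := fun i p hip hM => hatW_of_ext_one hL n (hX _) fun Z hZ =>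
      ext_summand i p hip 1 (ext_hatW hL n hZ hM 1 le_rfl)
    have hepi : ∀ M : C, ∃ (K U : C) (f : K ⟶ U) (g : U ⟶ M), IsSES f g ∧ X U ∧ Hat W n K := by
      intro M
      cases n with
      | zero => exact ⟨0, M, 0, 𝟙 M, isSES_zero_id M, hX M, hL.subW.zero⟩
      | succ n =>
        obtain ⟨K, U, f, g, h, hU, hK⟩ := exists_resolution hL n M (hX M)
        exact ⟨K, U, f, g, h, hU, hat_succ hL.subW.zero hK⟩
    have hcone : ∀ M, ConeCls (Hat W n) W M ↔ Hat W n M := by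
      intro M
      constructor
      · rintro ⟨V, S, f, g, h, hV, hS⟩
        exact hatW_of_ext_one hL n (hX M) fun Z hZ =>
          h.ext_right Z 1 (hL.perp S hS Z hZ 1 le_rfl) (ext_hatW hL n hZ hV 2 (by omega))
      · intro hM
        obtain ⟨K, E, f, g, h, hE, hK⟩ := hat_succ hL.subW.zero hM
        exact ⟨K, E, f, g, h, hK, hE⟩
    have hcocone : ∀ M, CoConeCls (Hat W n) W M ↔ Hat W n M := by
      intro M
      constructor
      · rintro ⟨V, S, f, g, h, hV, hS⟩
        obtain ⟨r, hr⟩ := h.exists_retraction (hWproj S M hS)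
        exact hsummand f r hr hV
      · intro hM
        exact ⟨M, 0, 𝟙 M, 0, isSES_id_zero M, hM, hL.subW.zero⟩
    refine ⟨?_, ?_, fun M N hM _ => hWproj M N hM, fun M => (hcone M).trans (hcocone M).symm⟩
    · exact
        { subU := fun _ _ => trivial
          subV := fun _ _ => trivial
          isoU := hL.subW.iso_closed
          summandU := hL.subW.summand_closed
          isoV := fun _ _ => trivial
          summandV := fun _ _ _ _ => trivial
          ext1 := fun M N hM _ => hWproj M N hM
          res := fun M _ => by
            obtain ⟨_, U, _, g, h, hU, _⟩ := hepi M
            obtain ⟨_, W₀, _, g', h', hW₀, _⟩ := hF.gen.2 U hU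
            have := h.epi
            have := h'.epi
            exact ⟨_, W₀, kernel.ι (g' ≫ g), g' ≫ g,
              isSES_of_kernel _ _ (kernel.condition _)
                (fun _ t ht => ⟨kernel.lift _ t ht, kernel.lift_ι _ _ _⟩), hW₀, trivial⟩
          cores := fun M _ =>
            ⟨M, 0, 𝟙 M, 0, isSES_id_zero M, hL.subW.zero, trivial⟩ }
    · exact
        { subU := fun _ _ => trivial
          subV := fun _ _ => trivial
          isoU := hL.subX.iso_closed
          summandU := hL.subX.summand_closed
          isoV := fun e hM => hsummand e.inv e.hom e.inv_hom_id hM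
          summandV := hsummand
          ext1 := fun M N hM hN => ext_hatW hL n hM hN 1 le_rfl
          res := fun M _ => hepi M
          cores := fun M _ => exists_coresolution hL n M (hX M) }
  · rintro ⟨-, hXW, -, -⟩ M
    obtain ⟨V, U, f, g, h, hU, hV⟩ := hXW.cores M trivial
    exact hat_of_coresolution hL n h hU hV

end FrobeniusPaper
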